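/- (Calibration asymptotics for strict partitions.) As z → 1⁻, the expected size of a Boltzmann-distributed strict partition satisfies Σ_{n=1}^{∞} n z^n / (1 + z^n) ~ π² / (12 (1 − z)²), i.e. the ratio of the two sides tends to 1. -/

import Mathlib

open Filter Real

/-- The Dirichlet eta function at `2`. -/
lemma hasSum_neg_one_pow_div_succ_sq :
    HasSum (fun k : ℕ => (-1 : ℝ) ^ k / ((k : ℝ) + 1) ^ 2) (π ^ 2 / 12) := by
  have hz : HasSum (fun k : ℕ => (1 : ℝ) / ((k : ℝ) + 1) ^ 2) (π ^ 2 / 6) := by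
    have h := (hasSum_nat_add_iff' 1).mpr hasSum_zeta_two
    simpa using h
  have hd : HasSum (fun k : ℕ => (1 : ℝ) / ((k : ℝ) + 1) ^ 2 - (-1) ^ k / ((k : ℝ) + 1) ^ 2)
      (0 + 1 / 2 * (π ^ 2 / 6)) := by
    refine HasSum.even_add_odd ?_ ?_
    · convert! hasSum_zero (α := ℝ) (β := ℕ) using 2 with k
      simp
    · convert! hz.mul_left (1 / 2) using 2 with k
      rw [pow_succ (-1 : ℝ), pow_mul (-1 : ℝ), neg_one_sq, one_pow]
      push_cast
      have : (k : ℝ) + 1 ≠ 0 := by positivity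
      have h2 : 2 * (k : ℝ) + 1 + 1 = 2 * (k + 1) := by ring
      rw [h2]
      field_simp
      norm_num
  convert! hz.sub hd using 1
  · funext k
    ring
  · ring

lemma succ_mul_pow_le_geom_sum_sq {w : ℝ} (h0 : 0 ≤ w) (h1 : w ≤ 1) (m : ℕ) :
    ((m : ℝ) + 1) * w ^ m ≤ ∑ i ∈ Finset.range (m + 1), (w ^ 2) ^ i := by
  induction m with
  | zero => simp
  | succ m ih =>
    rw [Finset.sum_range_succ]
    have hb : 1 + ((m + 1 : ℕ) : ℝ) * (w - 1) ≤ w ^ (m + 1) := by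
      have := one_add_mul_le_pow (a := w - 1) (by linarith) (m + 1)
      simpa using this
    have hp : 0 ≤ w ^ m := pow_nonneg h0 m
    have hp1 : w ^ (m + 1) ≤ 1 := pow_le_one₀ h0 h1
    have hs : (w ^ 2) ^ (m + 1) = w ^ m * (w * w ^ (m + 1)) := by ring
    have he : w ^ (m + 1) = w ^ m * w := pow_succ w m
    push_cast at hb ⊢
    have key : ((m : ℝ) + 1 + 1) * w ≤ (m + 1) + w * w ^ (m + 1) := by
      nlinarith [mul_nonneg (sub_nonneg.2 h1) (sub_nonneg.2 hp1)]
    calc ((m : ℝ) + 1 + 1) * w ^ (m + 1) = w ^ m * (((m : ℝ) + 1 + 1) * w) := by rw [he]; ring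
      _ ≤ w ^ m * ((m + 1) + w * w ^ (m + 1)) := mul_le_mul_of_nonneg_left key hp
      _ = (m + 1) * w ^ m + (w ^ 2) ^ (m + 1) := by rw [hs]; ring
      _ ≤ _ := by linarith

lemma pow_succ_div_geom_sum_sq_le {z : ℝ} (h0 : 0 < z) (h1 : z ≤ 1) (k : ℕ) :
    z ^ (k + 1) / (∑ i ∈ Finset.range (k + 1), z ^ i) ^ 2 ≤ 1 / ((k : ℝ) + 1) ^ 2 := by
  have hS : 0 < ∑ i ∈ Finset.range (k + 1), z ^ i :=
    Finset.sum_pos (fun i _ => pow_pos h0 i) (by simp)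
  have h := succ_mul_pow_le_geom_sum_sq (sqrt_nonneg z) (sqrt_le_one.2 h1) k
  rw [sq_sqrt h0.le] at h
  have hsq := pow_le_pow_left₀ (by positivity) h 2
  rw [mul_pow, ← pow_mul, mul_comm k 2, pow_mul, sq_sqrt h0.le] at hsq
  rw [div_le_div_iff₀ (by positivity) (by positivity)]
  have : z ^ (k + 1) ≤ z ^ k := pow_le_pow_of_le_one h0.le h1 (Nat.le_succ k)
  nlinarith [sq_nonneg ((k : ℝ) + 1)]

/-- Expanding each summand as a geometric series and exchanging the order of summation. -/
lemma tsum_succ_mul_pow_div_one_add_pow {z : ℝ} (h0 : 0 < z) (h1 : z < 1) :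
    ∑' n : ℕ, ((n : ℝ) + 1) * z ^ (n + 1) / (1 + z ^ (n + 1)) =
      ∑' k : ℕ, (-1 : ℝ) ^ k * (z ^ (k + 1) / (1 - z ^ (k + 1)) ^ 2) := by
  have hlt (m : ℕ) : z ^ (m + 1) < 1 := pow_lt_one₀ h0.le h1 (Nat.succ_ne_zero m)
  have hnorm : ‖z‖ < 1 := by rwa [norm_of_nonneg h0.le]
  have hrow (n : ℕ) : ∑' k : ℕ, (-1 : ℝ) ^ k * (((n : ℝ) + 1) * z ^ ((n + 1) * (k + 1))) =
      ((n : ℝ) + 1) * z ^ (n + 1) / (1 + z ^ (n + 1)) := by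
    have hn : ‖-z ^ (n + 1)‖ < 1 := by
      rw [norm_neg, norm_of_nonneg (by positivity)]
      exact hlt n
    have h := (hasSum_geometric_of_norm_lt_one hn).mul_left (((n : ℝ) + 1) * z ^ (n + 1))
    rw [sub_neg_eq_add, ← div_eq_mul_inv] at h
    rw [← h.tsum_eq]
    refine tsum_congr fun k => ?_
    rw [neg_pow (z ^ (n + 1)), pow_mul, pow_succ (z ^ (n + 1)) k]
    ring
  have hcol (k : ℕ) : ∑' n : ℕ, (-1 : ℝ) ^ k * (((n : ℝ) + 1) * z ^ ((n + 1) * (k + 1))) =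
      (-1 : ℝ) ^ k * (z ^ (k + 1) / (1 - z ^ (k + 1)) ^ 2) := by
    have hk : ‖z ^ (k + 1)‖ < 1 := by
      rw [norm_of_nonneg (by positivity)]
      exact hlt k
    have h : HasSum (fun n : ℕ => ((n + 1 : ℕ) : ℝ) * (z ^ (k + 1)) ^ (n + 1))
        (z ^ (k + 1) / (1 - z ^ (k + 1)) ^ 2) := by
      have hs := hasSum_coe_mul_geometric_of_norm_lt_one hk
      generalize z ^ (k + 1) = x at hs ⊢
      simpa using (hasSum_nat_add_iff' (f := fun n : ℕ => (n : ℝ) * x ^ n) 1).mpr hs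
    rw [← (h.mul_left ((-1 : ℝ) ^ k)).tsum_eq]
    refine tsum_congr fun n => ?_
    rw [mul_comm (n + 1) (k + 1), pow_mul]
    push_cast
    ring
  have hsum : Summable (Function.uncurry fun n k : ℕ =>
      (-1 : ℝ) ^ k * (((n : ℝ) + 1) * z ^ ((n + 1) * (k + 1)))) := by
    have hn : Summable fun n : ℕ => ((n : ℝ) + 1) * z ^ (n + 1) := by
      have hs := (hasSum_coe_mul_geometric_of_norm_lt_one hnorm).summable
      simpa using (summable_nat_add_iff (f := fun n : ℕ => (n : ℝ) * z ^ n) 1).mpr hs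
    have hk : Summable fun k : ℕ => z ^ k := summable_geometric_of_lt_one h0.le h1
    refine Summable.of_norm_bounded (hn.mul_of_nonneg hk (fun n => ?_) fun k => ?_) ?_
    · simp only [Pi.zero_apply]; positivity
    · simp only [Pi.zero_apply]; positivity
    · rintro ⟨n, k⟩
      simp only [Function.uncurry_apply_pair, norm_mul, norm_pow, norm_neg, norm_one, one_pow,
        one_mul]
      rw [norm_of_nonneg h0.le, norm_of_nonneg (by positivity), mul_assoc, ← pow_add]
      refine mul_le_mul_of_nonneg_left (pow_le_pow_of_le_one h0.le h1.le ?_) (by positivity)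
      nlinarith [Nat.zero_le (n * k)]
  simp_rw [← hrow, ← hcol]
  exact hsum.tsum_comm.symm

lemma tendsto_tsum_neg_one_pow_mul_pow_div_geom_sum_sq :
    Tendsto (fun z : ℝ => ∑' k : ℕ, (-1 : ℝ) ^ k *
        (z ^ (k + 1) / (∑ i ∈ Finset.range (k + 1), z ^ i) ^ 2))
      (nhdsWithin 1 (Set.Iio 1)) (nhds (π ^ 2 / 12)) := by
  rw [← hasSum_neg_one_pow_div_succ_sq.tsum_eq]
  refine tendsto_tsum_of_dominated_convergence (bound := fun k : ℕ => 1 / ((k : ℝ) + 1) ^ 2)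
    ?_ (fun k => ?_) ?_
  · have h := (summable_nat_add_iff 1).mpr hasSum_zeta_two.summable
    simpa using h
  · have hc : ContinuousAt (fun z : ℝ => (-1 : ℝ) ^ k *
        (z ^ (k + 1) / (∑ i ∈ Finset.range (k + 1), z ^ i) ^ 2)) 1 := by
      refine continuousAt_const.mul (ContinuousAt.div (by fun_prop) (by fun_prop) ?_)
      simp only [one_pow, Finset.sum_const, Finset.card_range, nsmul_eq_mul, mul_one]
      positivity
    have ht := hc.tendsto.mono_left (nhdsWithin_le_nhds (s := Set.Iio 1))
    simpa [div_eq_mul_inv] using ht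
  · filter_upwards [Ioo_mem_nhdsLT (zero_lt_one (α := ℝ))] with z hz k
    have hpos : 0 ≤ z ^ (k + 1) / (∑ i ∈ Finset.range (k + 1), z ^ i) ^ 2 :=
      div_nonneg (pow_nonneg hz.1.le _) (sq_nonneg _)
    rw [norm_mul, norm_pow, norm_neg, norm_one, one_pow, one_mul, norm_of_nonneg hpos]
    exact pow_succ_div_geom_sum_sq_le hz.1 hz.2.le k

/-- **Calibration asymptotics for strict partitions.** As `z → 1⁻`,
the expected size of a Boltzmann-distributed strict partition satisfies
`∑_{n ≥ 1} n * z ^ n / (1 + z ^ n) ~ π ^ 2 / (12 * (1 - z) ^ 2)`, i.e. the ratio of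
the two sides tends to `1`. -/
theorem strict_partition_expected_size_asymptotics :
    Tendsto
      (fun z : ℝ =>
        (∑' n : ℕ, ((n : ℝ) + 1) * z ^ (n + 1) / (1 + z ^ (n + 1)))
          / (π ^ 2 / (12 * (1 - z) ^ 2)))
      (nhdsWithin 1 (Set.Iio 1)) (nhds 1) := by
  have hlim := tendsto_tsum_neg_one_pow_mul_pow_div_geom_sum_sq.div_const (π ^ 2 / 12)
  rw [div_self (by positivity)] at hlim
  refine hlim.congr' ?_
  filter_upwards [Ioo_mem_nhdsLT (zero_lt_one (α := ℝ))] with z hz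
  have hz1 : 1 - z ≠ 0 := (sub_pos.2 hz.2).ne'
  have hterm : ∑' k : ℕ, (-1 : ℝ) ^ k *
      (z ^ (k + 1) / (∑ i ∈ Finset.range (k + 1), z ^ i) ^ 2) =
      (1 - z) ^ 2 * ∑' k : ℕ, (-1 : ℝ) ^ k * (z ^ (k + 1) / (1 - z ^ (k + 1)) ^ 2) := by
    rw [← tsum_mul_left]
    refine tsum_congr fun k => ?_
    have hS : (∑ i ∈ Finset.range (k + 1), z ^ i) ≠ 0 :=
      (Finset.sum_pos (fun i _ => pow_pos hz.1 i) (by simp)).ne'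
    rw [← mul_neg_geom_sum z (k + 1)]
    field_simp
  rw [tsum_succ_mul_pow_div_one_add_pow hz.1 hz.2, hterm]
  field_simp
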